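/- Let S ⊂ ℝ^k be a halfspace and let Σ ⊆ S be an additive semigroup containing 0. Then the maximal ideal space M(APW^k_Σ) of the Banach algebra APW^k_Σ is a contractible topological space. -/

import Mathlib

/- Almost periodic functions of `k` real variables, their Bohr-Fourier
coefficients and spectra, the Wiener algebra, and halfspaces. -/

open MeasureTheory Filter BoundedContinuousFunction

noncomputable section

/-- The Banach algebra of bounded continuous functions `ℝ^k → ℂ` (sup norm). -/
abbrev APB (k : ℕ) := BoundedContinuousFunction (Fin k → ℝ) ℂ

/-- The elementary exponential `e_λ(x) = e^{i⟨λ,x⟩}` as a bounded continuous function. -/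
def apExp (k : ℕ) (lam : Fin k → ℝ) : APB k :=
  BoundedContinuousFunction.ofNormedAddCommGroup
    (fun x => Complex.exp (Complex.I * ((∑ j, lam j * x j : ℝ) : ℂ)))
    (by fun_prop) 1
    (fun x => by
      simp [Complex.norm_exp, Complex.mul_re])

/-- `AP^k`: the closed subalgebra of `L^∞`-type bounded continuous functions
generated by all exponentials `e_λ`, `λ ∈ ℝ^k`. -/
def APalg (k : ℕ) : Subalgebra ℂ (APB k) :=
  (Algebra.adjoin ℂ (Set.range (apExp k))).topologicalClosure

/-- The Bohr-Fourier coefficient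
`f_λ = lim_{T→∞} (2T)^{-k} ∫_{[-T,T]^k} e^{-i⟨λ,x⟩} f(x) dx`. -/
def bohrCoeff (k : ℕ) (f : (Fin k → ℝ) → ℂ) (lam : Fin k → ℝ) : ℂ :=
  limUnder atTop (fun T : ℝ =>
    (((2 * T) ^ k : ℝ) : ℂ)⁻¹ *
      ∫ x in Set.Icc (fun _ => -T : Fin k → ℝ) (fun _ => T),
        Complex.exp (-(Complex.I * ((∑ j, lam j * x j : ℝ) : ℂ))) * f x)

/-- The Bohr-Fourier spectrum `σ(f) = {λ : f_λ ≠ 0}`. -/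
def bohrSpectrum (k : ℕ) (f : (Fin k → ℝ) → ℂ) : Set (Fin k → ℝ) :=
  {lam | bohrCoeff k f lam ≠ 0}

/-- Membership in `AP^k_Δ = {f ∈ AP^k : σ(f) ⊆ Δ}`. -/
def APmem (k : ℕ) (Δ : Set (Fin k → ℝ)) (f : APB k) : Prop :=
  f ∈ APalg k ∧ bohrSpectrum k ⇑f ⊆ Δ

/-- Membership in the Wiener algebra `APW^k_Δ`: almost periodic with spectrum
in `Δ` and absolutely convergent Bohr-Fourier series. -/
def APWmem (k : ℕ) (Δ : Set (Fin k → ℝ)) (f : APB k) : Prop :=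
  APmem k Δ f ∧ Summable (fun lam => ‖bohrCoeff k (⇑f) lam‖)

/-- The Wiener norm `‖f‖_W = ∑_λ |f_λ|`. -/
def wienerNorm (k : ℕ) (f : (Fin k → ℝ) → ℂ) : ℝ :=
  ∑' lam, ‖bohrCoeff k f lam‖

/-- A halfspace `S ⊂ ℝ^k`: `ℝ^k = S ∪ (-S)`, `S ∩ (-S) = {0}`, and `S` is
closed under addition and under multiplication by nonnegative reals. -/
structure IsHalfspace (k : ℕ) (S : Set (Fin k → ℝ)) : Prop where
  union : S ∪ -S = Set.univ
  inter : S ∩ -S = {0}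
  add_mem : ∀ x ∈ S, ∀ y ∈ S, x + y ∈ S
  smul_mem : ∀ x ∈ S, ∀ a : ℝ, 0 ≤ a → a • x ∈ S

/- The maximal ideal space of a subalgebra of bounded continuous functions,
realized as the set of nonzero multiplicative linear functionals on the given
carrier set, with the weak* (pointwise convergence) topology. -/

/-- The maximal ideal space of the (sub)algebra with carrier `Sset`: nonzero
multiplicative linear functionals `φ : Sset → ℂ`.  The topology (weak*) is the
subspace topology of pointwise convergence. -/
def apCharacters (k : ℕ) (Sset : Set (APB k)) : Set (↥Sset → ℂ) :=
  {φ | φ ≠ 0 ∧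
    (∀ (f g : ↥Sset) (h : (f : APB k) + (g : APB k) ∈ Sset),
      φ ⟨(f : APB k) + (g : APB k), h⟩ = φ f + φ g) ∧
    (∀ (c : ℂ) (f : ↥Sset) (h : c • (f : APB k) ∈ Sset),
      φ ⟨c • (f : APB k), h⟩ = c * φ f) ∧
    (∀ (f g : ↥Sset) (h : (f : APB k) * (g : APB k) ∈ Sset),
      φ ⟨(f : APB k) * (g : APB k), h⟩ = φ f * φ g)}

/-! ### Means over boxes -/

/-- The average of `f` over the box `[-T,T]^k`. -/
def boxAverage (k : ℕ) (T : ℝ) (f : APB k) : ℂ :=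
  (((2 * T) ^ k : ℝ) : ℂ)⁻¹ * ∫ x in Set.Icc (fun _ => -T : Fin k → ℝ) (fun _ => T), f x

lemma apExp_apply (k : ℕ) (lam x : Fin k → ℝ) :
    apExp k lam x = Complex.exp (Complex.I * ((∑ j, lam j * x j : ℝ) : ℂ)) := rfl

lemma apExp_zero (k : ℕ) : apExp k 0 = 1 := by
  ext x
  simp [apExp_apply]

lemma apExp_add (k : ℕ) (lam mu : Fin k → ℝ) :
    apExp k (lam + mu) = apExp k lam * apExp k mu := by
  ext x
  simp only [BoundedContinuousFunction.coe_mul, Pi.mul_apply, apExp_apply, ← Complex.exp_add,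
    Pi.add_apply, add_mul, Finset.sum_add_distrib, Complex.ofReal_add, mul_add]

lemma star_apExp (k : ℕ) (lam : Fin k → ℝ) : star (apExp k lam) = apExp k (-lam) := by
  ext x
  simp only [BoundedContinuousFunction.star_apply, apExp_apply, RCLike.star_def,
    ← Complex.exp_conj]
  simp

lemma norm_apExp_le (k : ℕ) (lam : Fin k → ℝ) : ‖apExp k lam‖ ≤ 1 := by
  refine (BoundedContinuousFunction.norm_le zero_le_one).2 fun x => ?_
  simp [apExp_apply, Complex.norm_exp, Complex.mul_re]

lemma bohrCoeff_eq_limUnder (k : ℕ) (f : APB k) (lam : Fin k → ℝ) :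
    bohrCoeff k f lam = limUnder atTop (fun T => boxAverage k T (apExp k (-lam) * f)) := by
  unfold bohrCoeff boxAverage
  congr! 6 with T x
  simp [apExp_apply]

lemma integrableOn_box (k : ℕ) (T : ℝ) (f : APB k) :
    IntegrableOn f (Set.Icc (fun _ => -T : Fin k → ℝ) (fun _ => T)) :=
  f.continuous.continuousOn.integrableOn_compact isCompact_Icc

lemma boxAverage_add (k : ℕ) (T : ℝ) (f g : APB k) :
    boxAverage k T (f + g) = boxAverage k T f + boxAverage k T g := by
  simp only [boxAverage, BoundedContinuousFunction.coe_add, Pi.add_apply, ← mul_add]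
  rw [integral_add (integrableOn_box k T f) (integrableOn_box k T g)]

lemma boxAverage_smul (k : ℕ) (T : ℝ) (c : ℂ) (f : APB k) :
    boxAverage k T (c • f) = c * boxAverage k T f := by
  simp only [boxAverage, BoundedContinuousFunction.coe_smul, smul_eq_mul, integral_const_mul]
  ring

lemma volume_real_box (k : ℕ) {T : ℝ} (hT : 0 < T) :
    volume.real (Set.Icc (fun _ => -T : Fin k → ℝ) (fun _ => T)) = (2 * T) ^ k := by
  rw [Measure.real, Real.volume_Icc_pi_toReal (fun _ => by linarith)]
  simp [two_mul]

lemma norm_boxAverage_le (k : ℕ) {T : ℝ} (hT : 0 < T) (f : APB k) :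
    ‖boxAverage k T f‖ ≤ ‖f‖ := by
  have h := norm_setIntegral_le_of_norm_le_const (μ := volume)
    (s := Set.Icc (fun _ => -T : Fin k → ℝ) (fun _ => T)) isCompact_Icc.measure_lt_top
    (fun x _ => f.norm_coe_le_norm x)
  rw [volume_real_box k hT] at h
  have hp : 0 < (2 * T) ^ k := by positivity
  rw [boxAverage, norm_mul, norm_inv, Complex.norm_real, Real.norm_of_nonneg hp.le,
    inv_mul_le_iff₀ hp, mul_comm]
  exact h

lemma boxAverage_re_mono (k : ℕ) {T : ℝ} (hT : 0 < T) {f : APB k} {c : ℝ}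
    (h : ∀ x, c ≤ (f x).re) : c ≤ (boxAverage k T f).re := by
  have hp : 0 < (2 * T) ^ k := by positivity
  rw [boxAverage, ← Complex.ofReal_inv, Complex.re_ofReal_mul,
    show (∫ x in Set.Icc (fun _ => -T : Fin k → ℝ) (fun _ => T), f x).re =
      ∫ x in Set.Icc (fun _ => -T : Fin k → ℝ) (fun _ => T), (f x).re from
      (integral_re (integrableOn_box k T f)).symm, le_inv_mul_iff₀ hp, ← volume_real_box k hT]
  have := setIntegral_mono_on (μ := volume)
    (s := Set.Icc (fun _ => -T : Fin k → ℝ) (fun _ => T)) (f := fun _ => c)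
    (g := fun x => (f x).re) (by simp [isCompact_Icc.measure_lt_top])
    (integrableOn_box k T f).re measurableSet_Icc (fun x _ => h x)
  simpa using this

lemma tendsto_average_exp (a : ℝ) :
    Tendsto (fun T : ℝ => ((2 * T : ℝ) : ℂ)⁻¹ *
      ∫ x in Set.Icc (-T) T, Complex.exp (Complex.I * ((a * x : ℝ) : ℂ))) atTop
      (nhds (if a = 0 then 1 else 0)) := by
  split_ifs with ha
  · refine tendsto_const_nhds.congr' ?_
    filter_upwards [eventually_gt_atTop 0] with T hT
    have : (T : ℂ) ≠ 0 := by exact_mod_cast hT.ne'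
    have h2 : max (T + T) 0 = T + T := max_eq_left (by linarith)
    simp [ha, h2]
    field_simp
    norm_num
  · rw [tendsto_zero_iff_norm_tendsto_zero]
    have hlim : Tendsto (fun T : ℝ => (1 / |a|) * T⁻¹) atTop (nhds 0) := by
      simpa using tendsto_inv_atTop_zero.const_mul (1 / |a|)
    refine squeeze_zero' (Eventually.of_forall fun _ => norm_nonneg _) ?_ hlim
    filter_upwards [eventually_gt_atTop 0] with T hT
    have hI : (Complex.I * a) ≠ 0 := by simp [ha]
    rw [integral_Icc_eq_integral_Ioc, ← intervalIntegral.integral_of_le (by linarith)]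
    have : ∀ x : ℝ, Complex.I * ((a * x : ℝ) : ℂ) = (Complex.I * a) * x := fun x => by
      push_cast; ring
    simp_rw [this]
    rw [integral_exp_mul_complex hI, norm_mul, norm_div, norm_inv]
    have hn : ∀ y : ℝ, ‖Complex.exp (Complex.I * a * y)‖ = 1 := fun y => by
      simp [Complex.norm_exp, Complex.mul_re]
    have h2 := norm_sub_le (Complex.exp (Complex.I * a * T))
      (Complex.exp (Complex.I * a * (-T : ℝ)))
    rw [hn, hn] at h2
    have ha' : 0 < |a| := abs_pos.2 ha
    have e1 : ‖Complex.I * (a : ℂ)‖ = |a| := by simp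
    have e2 : ‖((2 * T : ℝ) : ℂ)‖ = 2 * T := by
      rw [Complex.norm_real, Real.norm_of_nonneg (by linarith)]
    rw [e1, e2, ← div_eq_inv_mul, div_div, div_le_iff₀ (by positivity)]
    calc _ ≤ (1 : ℝ) + 1 := h2
      _ = _ := by field_simp; norm_num

lemma tendsto_boxAverage_apExp (k : ℕ) (lam : Fin k → ℝ) :
    Tendsto (fun T => boxAverage k T (apExp k lam)) atTop
      (nhds (if lam = 0 then 1 else 0)) := by
  have h := tendsto_finsetProd Finset.univ fun j _ => tendsto_average_exp (lam j)
  have e : (∏ j, if lam j = 0 then (1 : ℂ) else 0) = if lam = 0 then 1 else 0 := by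
    rw [Finset.prod_ite_zero]
    simp [funext_iff]
  rw [e] at h
  refine h.congr fun T => ?_
  rw [boxAverage, Finset.prod_mul_distrib, Finset.prod_const, Finset.card_univ, Fintype.card_fin,
    inv_pow, ← Complex.ofReal_pow]
  congr 1
  rw [← Set.pi_univ_Icc, volume_pi, Measure.restrict_pi_pi, ← integral_fintype_prod_eq_prod]
  congr! 2 with x
  rw [apExp_apply, ← Complex.exp_sum, Complex.ofReal_sum, Finset.mul_sum]

/-! ### The mean value on almost periodic functions -/

lemma adjoin_range_apExp (k : ℕ) :
    Subalgebra.toSubmodule (Algebra.adjoin ℂ (Set.range (apExp k))) =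
      Submodule.span ℂ (Set.range (apExp k)) := by
  let R : Submonoid (APB k) :=
    { carrier := Set.range (apExp k)
      mul_mem' := by
        rintro _ _ ⟨a, rfl⟩ ⟨b, rfl⟩
        exact ⟨a + b, apExp_add k a b⟩
      one_mem' := ⟨0, apExp_zero k⟩ }
  rw [Algebra.adjoin_eq_span]
  congr 1
  exact congrArg (fun s : Submonoid (APB k) => (s : Set (APB k))) (Submonoid.closure_eq R)

/-- Induction principle for almost periodic functions. -/
@[elab_as_elim]
lemma APalg_induction {k : ℕ} {p : APB k → Prop} (hexp : ∀ lam, p (apExp k lam))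
    (hadd : ∀ f g, p f → p g → p (f + g)) (hsmul : ∀ (c : ℂ) f, p f → p (c • f))
    (hclosed : IsClosed {f | p f}) {f : APB k} (hf : f ∈ APalg k) : p f := by
  have hsub : ((Algebra.adjoin ℂ (Set.range (apExp k)) : Subalgebra ℂ (APB k)) : Set (APB k)) ⊆
      {f | p f} := by
    intro g hg
    have hg' : g ∈ Submodule.span ℂ (Set.range (apExp k)) := by
      rw [← adjoin_range_apExp]
      exact hg
    induction hg' using Submodule.span_induction with
    | mem x hx => obtain ⟨lam, rfl⟩ := hx; exact hexp lam
    | zero => simpa using hsmul 0 _ (hexp 0)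
    | add x y hx hy ihx ihy =>
      rw [← adjoin_range_apExp] at hx hy
      exact hadd _ _ (ihx hx) (ihy hy)
    | smul c x hx ih =>
      rw [← adjoin_range_apExp] at hx
      exact hsmul _ _ (ih hx)
  exact closure_minimal hsub hclosed hf

lemma apExp_mem_APalg (k : ℕ) (lam : Fin k → ℝ) : apExp k lam ∈ APalg k :=
  Subalgebra.le_topologicalClosure _ (Algebra.subset_adjoin ⟨lam, rfl⟩)

lemma isClosed_APalg (k : ℕ) : IsClosed (APalg k : Set (APB k)) :=
  Subalgebra.isClosed_topologicalClosure _

lemma boxAverage_sub (k : ℕ) (T : ℝ) (f g : APB k) :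
    boxAverage k T (f - g) = boxAverage k T f - boxAverage k T g := by
  have := boxAverage_add k T (f - g) g
  rw [sub_add_cancel] at this
  rw [this, add_sub_cancel_right]

lemma exists_tendsto_boxAverage {k : ℕ} {f : APB k} (hf : f ∈ APalg k) :
    ∃ m, Tendsto (fun T => boxAverage k T f) atTop (nhds m) := by
  refine APalg_induction (fun lam => ?_) (fun f g hf hg => ?_) (fun c f hf => ?_) ?_ hf
  · exact ⟨_, tendsto_boxAverage_apExp k lam⟩
  · obtain ⟨a, ha⟩ := hf
    obtain ⟨b, hb⟩ := hg
    exact ⟨a + b, by simpa only [boxAverage_add] using ha.add hb⟩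
  · obtain ⟨a, ha⟩ := hf
    exact ⟨c * a, by simpa only [boxAverage_smul] using ha.const_mul c⟩
  · refine isClosed_of_closure_subset fun f hf => cauchySeq_tendsto_of_complete ?_
    refine Metric.cauchySeq_iff'.2 fun ε hε => ?_
    obtain ⟨g, ⟨m, hm⟩, hg⟩ := Metric.mem_closure_iff.1 hf (ε / 3) (by positivity)
    have key : ∀ T, 0 < T → dist (boxAverage k T f) (boxAverage k T g) < ε / 3 := fun T hT => by
      rw [dist_eq_norm, ← boxAverage_sub]
      exact (norm_boxAverage_le k hT _).trans_lt (by rwa [← dist_eq_norm])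
    obtain ⟨N', hN'⟩ := Metric.cauchySeq_iff.1 hm.cauchySeq (ε / 3) (by positivity)
    refine ⟨max N' 1, fun T hT => ?_⟩
    have h1 : N' ≤ T := (le_max_left _ _).trans hT
    have h2 : 0 < T := zero_lt_one.trans_le ((le_max_right _ _).trans hT)
    have h3 := key T h2
    have h4 := key (max N' 1) (zero_lt_one.trans_le (le_max_right _ _))
    have h5 := hN' T h1 (max N' 1) (le_max_left _ _)
    rw [dist_comm] at h4
    linarith [dist_triangle4 (boxAverage k T f) (boxAverage k T g)
      (boxAverage k (max N' 1) g) (boxAverage k (max N' 1) f)]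

lemma tendsto_boxAverage_limUnder {k : ℕ} {f : APB k} (hf : f ∈ APalg k) :
    Tendsto (fun T => boxAverage k T f) atTop
      (nhds (limUnder atTop fun T => boxAverage k T f)) :=
  tendsto_nhds_limUnder (exists_tendsto_boxAverage hf)

/-- The Bohr mean as a continuous linear functional on `AP^k`. -/
def bohrMean (k : ℕ) : APalg k →L[ℂ] ℂ :=
  LinearMap.mkContinuous
    { toFun := fun f => limUnder atTop fun T => boxAverage k T (f : APB k)
      map_add' := fun f g => by
        refine Tendsto.limUnder_eq ?_
        simpa only [Subalgebra.coe_add, boxAverage_add] using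
          (tendsto_boxAverage_limUnder f.2).add (tendsto_boxAverage_limUnder g.2)
      map_smul' := fun c f => by
        refine Tendsto.limUnder_eq ?_
        simpa only [Subalgebra.coe_smul, boxAverage_smul, RingHom.id_apply, smul_eq_mul] using
          (tendsto_boxAverage_limUnder f.2).const_mul c }
    1 (fun f => by
      rw [one_mul]
      refine le_of_tendsto (tendsto_boxAverage_limUnder f.2).norm ?_
      filter_upwards [eventually_gt_atTop 0] with T hT
      exact norm_boxAverage_le k hT _)

/-- The exponential `e_λ` as an element of `AP^k`. -/
def apExpAP (k : ℕ) (lam : Fin k → ℝ) : APalg k := ⟨apExp k lam, apExp_mem_APalg k lam⟩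

/-- The Bohr-Fourier coefficient as a continuous linear functional on `AP^k`. -/
def bohrCoeffCLM (k : ℕ) (lam : Fin k → ℝ) : APalg k →L[ℂ] ℂ :=
  (bohrMean k).comp (ContinuousLinearMap.mul ℂ (APalg k) (apExpAP k (-lam)))

lemma bohrCoeffCLM_apply {k : ℕ} (lam : Fin k → ℝ) (f : APalg k) :
    bohrCoeffCLM k lam f = bohrCoeff k (f : APB k) lam :=
  (bohrCoeff_eq_limUnder k f lam).symm

lemma tendsto_boxAverage_bohrCoeff {k : ℕ} (lam : Fin k → ℝ) {f : APB k} (hf : f ∈ APalg k) :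
    Tendsto (fun T => boxAverage k T (apExp k (-lam) * f)) atTop (nhds (bohrCoeff k f lam)) := by
  rw [bohrCoeff_eq_limUnder]
  exact tendsto_boxAverage_limUnder ((APalg k).mul_mem (apExp_mem_APalg k _) hf)

lemma bohrCoeff_apExp (k : ℕ) (lam mu : Fin k → ℝ) :
    bohrCoeff k (apExp k mu) lam = if mu = lam then 1 else 0 := by
  have h := tendsto_boxAverage_bohrCoeff lam (apExp_mem_APalg k mu)
  rw [← apExp_add] at h
  rw [tendsto_nhds_unique h (tendsto_boxAverage_apExp k _)]
  simp [neg_add_eq_zero, eq_comm]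

/-! ### Uniqueness of Bohr-Fourier series -/

/-- The bounded continuous functions with vanishing mean. -/
def meanZero (k : ℕ) : Submodule ℂ (APB k) where
  carrier := {f | Tendsto (fun T => boxAverage k T f) atTop (nhds 0)}
  add_mem' := fun {f g} hf hg => by
    simpa only [Set.mem_ofPred_eq, boxAverage_add, add_zero] using Tendsto.add hf hg
  zero_mem' := by simp [boxAverage]
  smul_mem' := fun c f hf => by
    simpa only [Set.mem_ofPred_eq, boxAverage_smul, mul_zero] using Tendsto.const_mul c hf

lemma isClosed_meanZero (k : ℕ) : IsClosed (meanZero k : Set (APB k)) := by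
  refine isClosed_of_closure_subset fun f hf => ?_
  refine Metric.tendsto_nhds.2 fun ε hε => ?_
  obtain ⟨g, hg, hfg⟩ := Metric.mem_closure_iff.1 hf (ε / 2) (by positivity)
  filter_upwards [Metric.tendsto_nhds.1 hg (ε / 2) (by positivity), eventually_gt_atTop 0]
    with T h1 hT
  have h2 : dist (boxAverage k T f) (boxAverage k T g) < ε / 2 := by
    rw [dist_eq_norm, ← boxAverage_sub]
    exact (norm_boxAverage_le k hT _).trans_lt (by rwa [← dist_eq_norm])
  linarith [dist_triangle (boxAverage k T f) (boxAverage k T g) 0]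

/-- Translation of a bounded continuous function. -/
def apTranslate (k : ℕ) (s : Fin k → ℝ) (f : APB k) : APB k :=
  f.compContinuous ⟨fun x => x + s, by fun_prop⟩

lemma apTranslate_apply {k : ℕ} (s : Fin k → ℝ) (f : APB k) (x : Fin k → ℝ) :
    apTranslate k s f x = f (x + s) := rfl

lemma dist_apTranslate_le {k : ℕ} (s : Fin k → ℝ) (f g : APB k) :
    dist (apTranslate k s f) (apTranslate k s g) ≤ dist f g :=
  (BoundedContinuousFunction.dist_le dist_nonneg).2 fun x =>
    BoundedContinuousFunction.dist_coe_le_dist (x + s)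

lemma continuous_apTranslate {k : ℕ} (s : Fin k → ℝ) : Continuous (apTranslate k s) :=
  (LipschitzWith.mk_one fun f g => dist_apTranslate_le s f g).continuous

lemma apTranslate_apExp {k : ℕ} (s lam : Fin k → ℝ) :
    apTranslate k s (apExp k lam) = apExp k lam s • apExp k lam := by
  ext x
  simp only [apTranslate_apply, apExp_apply, BoundedContinuousFunction.coe_smul, smul_eq_mul,
    ← Complex.exp_add, Pi.add_apply, mul_add, Finset.sum_add_distrib, Complex.ofReal_add]
  rw [add_comm]

lemma apTranslate_sub_mem_meanZero {k : ℕ} (s : Fin k → ℝ) {f : APB k} (hf : f ∈ APalg k) :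
    apTranslate k s f - f ∈ meanZero k := by
  refine APalg_induction (fun lam => ?_) (fun f g hf hg => ?_) (fun c f hf => ?_) ?_ hf
  · rw [apTranslate_apExp]
    by_cases h : lam = 0
    · subst h
      simp [apExp_zero]
    · have hm : apExp k lam ∈ meanZero k := by
        have := tendsto_boxAverage_apExp k lam
        rwa [if_neg h] at this
      exact sub_mem (Submodule.smul_mem _ _ hm) hm
  · have : apTranslate k s (f + g) - (f + g) =
        (apTranslate k s f - f) + (apTranslate k s g - g) := by
      ext x; simp [apTranslate_apply]; ring
    rw [this]
    exact add_mem hf hg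
  · have : apTranslate k s (c • f) - c • f = c • (apTranslate k s f - f) := by
      ext x; simp [apTranslate_apply]; ring
    rw [this]
    exact Submodule.smul_mem _ _ hf
  · exact (isClosed_meanZero k).preimage ((continuous_apTranslate s).sub continuous_id)

lemma star_mem_APalg {k : ℕ} {f : APB k} (hf : f ∈ APalg k) : star f ∈ APalg k := by
  refine APalg_induction (fun lam => ?_) (fun f g hf hg => ?_) (fun c f hf => ?_) ?_ hf
  · rw [star_apExp]; exact apExp_mem_APalg k _
  · rw [star_add]; exact add_mem hf hg
  · rw [star_smul]; exact Subalgebra.smul_mem _ hf _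
  · exact (isClosed_APalg k).preimage continuous_star

lemma totallyBounded_translates {k : ℕ} {f : APB k} (hf : f ∈ APalg k) :
    TotallyBounded (Set.range fun s => apTranslate k s f) := by
  refine APalg_induction (fun lam => ?_) (fun f g hf hg => ?_) (fun c f hf => ?_) ?_ hf
  · have hc : IsCompact ((fun c : ℂ => c • apExp k lam) '' Metric.closedBall 0 1) :=
      (isCompact_closedBall 0 1).image (by fun_prop)
    refine hc.totallyBounded.subset ?_
    rintro _ ⟨s, rfl⟩
    refine ⟨apExp k lam s, ?_, (apTranslate_apExp s lam).symm⟩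
    simpa using ((apExp k lam).norm_coe_le_norm s).trans (norm_apExp_le k lam)
  · refine Metric.totallyBounded_iff.2 fun ε hε => ?_
    obtain ⟨t, ht, hft⟩ := Metric.totallyBounded_iff.1 hf (ε / 2) (by positivity)
    obtain ⟨u, hu, hgu⟩ := Metric.totallyBounded_iff.1 hg (ε / 2) (by positivity)
    refine ⟨Set.image2 (· + ·) t u, ht.image2 _ hu, ?_⟩
    rintro _ ⟨s, rfl⟩
    obtain ⟨y, hy, hdy⟩ := Set.mem_iUnion₂.1 (hft ⟨s, rfl⟩)
    obtain ⟨z, hz, hdz⟩ := Set.mem_iUnion₂.1 (hgu ⟨s, rfl⟩)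
    refine Set.mem_iUnion₂.2 ⟨y + z, ⟨y, hy, z, hz, rfl⟩, ?_⟩
    rw [Metric.mem_ball] at hdy hdz ⊢
    change dist (apTranslate k s f + apTranslate k s g) (y + z) < ε
    exact (dist_add_add_le _ _ _ _).trans_lt ((add_lt_add hdy hdz).trans_eq (add_halves ε))
  · refine (hf.image (uniformContinuous_const_smul c)).subset ?_
    rintro _ ⟨s, rfl⟩
    exact ⟨apTranslate k s f, ⟨s, rfl⟩, rfl⟩
  · refine isClosed_of_closure_subset fun f hf => Metric.totallyBounded_iff.2 fun ε hε => ?_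
    obtain ⟨g, hg, hfg⟩ := Metric.mem_closure_iff.1 hf (ε / 2) (by positivity)
    obtain ⟨t, ht, hsub⟩ := Metric.totallyBounded_iff.1 hg (ε / 2) (by positivity)
    refine ⟨t, ht, ?_⟩
    rintro _ ⟨s, rfl⟩
    obtain ⟨y, hy, hd⟩ := Set.mem_iUnion₂.1 (hsub ⟨s, rfl⟩)
    refine Set.mem_iUnion₂.2 ⟨y, hy, ?_⟩
    rw [Metric.mem_ball] at hd ⊢
    linarith [dist_triangle (apTranslate k s f) (apTranslate k s g) y, dist_apTranslate_le s f g]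

lemma mul_mem_meanZero {k : ℕ} {f : APB k} (hf : f ∈ APalg k)
    (h : ∀ lam, bohrCoeff k f lam = 0) {g : APB k} (hg : g ∈ APalg k) : g * f ∈ meanZero k := by
  refine APalg_induction (fun lam => ?_) (fun u v hu hv => ?_) (fun c u hu => ?_) ?_ hg
  · have := tendsto_boxAverage_bohrCoeff (-lam) hf
    rwa [neg_neg, h] at this
  · rw [add_mul]; exact add_mem hu hv
  · rw [smul_mul_assoc]; exact Submodule.smul_mem _ _ hu
  · exact (isClosed_meanZero k).preimage (continuous_id.mul continuous_const)

/-- An almost periodic function all of whose Bohr-Fourier coefficients vanish is zero. -/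
lemma eq_zero_of_bohrCoeff_eq_zero {k : ℕ} {f : APB k} (hf : f ∈ APalg k)
    (h : ∀ lam, bohrCoeff k f lam = 0) : f = 0 := by
  by_contra hne
  obtain ⟨x₀, hx₀⟩ : ∃ x, f x ≠ 0 := by
    by_contra! hall
    exact hne (BoundedContinuousFunction.ext hall)
  set ε := ‖f x₀‖ / 2 with hε
  have hεpos : 0 < ε := by positivity
  obtain ⟨t, hts, htf, hcov⟩ := Metric.finite_approx_of_totallyBounded
    (totallyBounded_translates hf) ε hεpos
  choose! σ hσ using fun y (hy : y ∈ t) => hts hy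
  have hq : star f * f ∈ APalg k := (APalg k).mul_mem (star_mem_APalg hf) hf
  have hq0 := mul_mem_meanZero hf h (star_mem_APalg hf)
  have hsum : ∑ y ∈ htf.toFinset, apTranslate k (σ y) (star f * f) ∈ meanZero k :=
    sum_mem fun y _ => by
      simpa using add_mem (apTranslate_sub_mem_meanZero (σ y) hq) hq0
  have hlower : ∀ x, ε ^ 2 ≤
      ((∑ y ∈ htf.toFinset, apTranslate k (σ y) (star f * f) : APB k) x).re := by
    intro x
    have hterm : ∀ y, (apTranslate k (σ y) (star f * f) x).re = ‖f (x + σ y)‖ ^ 2 := fun y => by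
      rw [apTranslate_apply, BoundedContinuousFunction.coe_mul, Pi.mul_apply,
        BoundedContinuousFunction.star_apply, RCLike.star_def, Complex.conj_mul']
      norm_cast
    rw [BoundedContinuousFunction.coe_sum, Finset.sum_apply, Complex.re_sum]
    simp_rw [hterm]
    obtain ⟨y, hy, hd⟩ := Set.mem_iUnion₂.1 (hcov ⟨x₀ - x, rfl⟩)
    have hdx := (BoundedContinuousFunction.dist_coe_le_dist
      (f := apTranslate k (x₀ - x) f) (g := y) x).trans_lt hd
    have hyx : y x = f (x + σ y) := by
      conv_lhs => rw [← hσ y hy]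
      rfl
    rw [apTranslate_apply, add_sub_cancel, hyx, dist_eq_norm] at hdx
    have hle : ε ≤ ‖f (x + σ y)‖ := by
      have := norm_sub_norm_le (f x₀) (f (x + σ y))
      linarith
    calc ε ^ 2 ≤ ‖f (x + σ y)‖ ^ 2 := by gcongr
      _ ≤ _ := Finset.single_le_sum (f := fun y => ‖f (x + σ y)‖ ^ 2) (fun _ _ => by positivity)
        (htf.mem_toFinset.2 hy)
  have hlim := (Complex.continuous_re.tendsto _).comp hsum
  have : ε ^ 2 ≤ (0 : ℂ).re := ge_of_tendsto hlim (by
    filter_upwards [eventually_gt_atTop 0] with T hT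
    exact boxAverage_re_mono k hT hlower)
  simp at this
  nlinarith

/-! ### The Wiener algebra -/

section AbsolutelyConvergent

variable {k : ℕ} {ι : Type*} {c : ι → ℂ} {l : ι → Fin k → ℝ} {f : APB k}

lemma mem_APalg_of_hasSum (hf : HasSum (fun i => c i • apExp k (l i)) f) : f ∈ APalg k :=
  (isClosed_APalg k).mem_of_tendsto hf (Eventually.of_forall fun _ =>
    sum_mem fun i _ => Subalgebra.smul_mem _ (apExp_mem_APalg k (l i)) _)

lemma hasSum_bohrCoeff (hf : HasSum (fun i => c i • apExp k (l i)) f) (nu : Fin k → ℝ) :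
    HasSum (fun i => if l i = nu then c i else 0) (bohrCoeff k f nu) := by
  have h : HasSum (fun i => c i • apExpAP k (l i))
      (⟨f, mem_APalg_of_hasSum hf⟩ : APalg k) :=
    (Topology.IsInducing.subtypeVal.hasSum_iff (g := (APalg k).val) _ _).1 hf
  have h' := h.mapL (bohrCoeffCLM k nu)
  rw [bohrCoeffCLM_apply] at h'
  refine h'.congr_fun ?_
  intro i
  rw [map_smul, bohrCoeffCLM_apply, apExpAP, bohrCoeff_apExp]
  simp

lemma hasSum_fiber_bohrCoeff (hf : HasSum (fun i => c i • apExp k (l i)) f)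
    (nu : Fin k → ℝ) :
    HasSum (fun i : {i // l i = nu} => c i) (bohrCoeff k f nu) := by
  refine (hasSum_subtype_iff_indicator (s := {i | l i = nu})).2 ?_
  refine (hasSum_bohrCoeff hf nu).congr_fun fun i => ?_
  simp [Set.indicator_apply]

lemma hasSum_fiberwise_norm (hc : Summable fun i => ‖c i‖) :
    HasSum (fun nu => ∑' i : {i // l i = nu}, ‖c i‖) (∑' i, ‖c i‖) := by
  have h := (Equiv.sigmaFiberEquiv l).hasSum_iff.2 hc.hasSum
  exact h.sigma fun nu => (h.summable.sigma_factor nu).hasSum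

lemma norm_bohrCoeff_le_fiber (hc : Summable fun i => ‖c i‖)
    (hf : HasSum (fun i => c i • apExp k (l i)) f) (nu : Fin k → ℝ) :
    ‖bohrCoeff k f nu‖ ≤ ∑' i : {i // l i = nu}, ‖c i‖ := by
  rw [← (hasSum_fiber_bohrCoeff hf nu).tsum_eq]
  exact norm_tsum_le_tsum_norm (hc.subtype _)

lemma summable_norm_bohrCoeff (hc : Summable fun i => ‖c i‖)
    (hf : HasSum (fun i => c i • apExp k (l i)) f) : Summable fun nu => ‖bohrCoeff k f nu‖ :=
  (hasSum_fiberwise_norm (l := l) hc).summable.of_nonneg_of_le (fun _ => norm_nonneg _)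
    (norm_bohrCoeff_le_fiber hc hf)

lemma wienerNorm_le (hc : Summable fun i => ‖c i‖)
    (hf : HasSum (fun i => c i • apExp k (l i)) f) : wienerNorm k f ≤ ∑' i, ‖c i‖ :=
  hasSum_le (norm_bohrCoeff_le_fiber hc hf) (summable_norm_bohrCoeff hc hf).hasSum
    (hasSum_fiberwise_norm hc)

lemma APWmem_of_hasSum {Δ : Set (Fin k → ℝ)} (hc : Summable fun i => ‖c i‖)
    (hl : ∀ i, c i ≠ 0 → l i ∈ Δ)
    (hf : HasSum (fun i => c i • apExp k (l i)) f) : APWmem k Δ f := by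
  refine ⟨⟨mem_APalg_of_hasSum hf, fun nu hnu => ?_⟩, summable_norm_bohrCoeff hc hf⟩
  by_contra hmem
  refine hnu ((hasSum_fiber_bohrCoeff hf nu).unique ?_)
  convert hasSum_zero with i
  by_contra hi
  exact hmem (i.2 ▸ hl i hi)

lemma hasSum_bohrCoeff_mul {s : ℂ} (hf : HasSum (fun i => c i • apExp k (l i)) f)
    (χ : (Fin k → ℝ) → ℂ) (hs : HasSum (fun i => c i * χ (l i)) s) :
    HasSum (fun nu => bohrCoeff k f nu * χ nu) s := by
  refine ((Equiv.sigmaFiberEquiv l).hasSum_iff.2 hs).sigma fun nu => ?_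
  refine ((hasSum_fiber_bohrCoeff hf nu).mul_right (χ nu)).congr_fun ?_
  rintro ⟨i, rfl⟩
  rfl

end AbsolutelyConvergent

lemma norm_smul_apExp_le {k : ℕ} (c : ℂ) (lam : Fin k → ℝ) : ‖c • apExp k lam‖ ≤ ‖c‖ := by
  rw [norm_smul]
  exact mul_le_of_le_one_right (norm_nonneg _) (norm_apExp_le k lam)

lemma bohrCoeff_sub {k : ℕ} {f g : APB k} (hf : f ∈ APalg k) (hg : g ∈ APalg k)
    (nu : Fin k → ℝ) : bohrCoeff k (f - g : APB k) nu = bohrCoeff k f nu - bohrCoeff k g nu := by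
  have := (bohrCoeffCLM k nu).map_sub ⟨f, hf⟩ ⟨g, hg⟩
  simp only [bohrCoeffCLM_apply] at this
  exact this

lemma bohrCoeff_add {k : ℕ} {f g : APB k} (hf : f ∈ APalg k) (hg : g ∈ APalg k)
    (nu : Fin k → ℝ) : bohrCoeff k (f + g : APB k) nu = bohrCoeff k f nu + bohrCoeff k g nu := by
  have := (bohrCoeffCLM k nu).map_add ⟨f, hf⟩ ⟨g, hg⟩
  simp only [bohrCoeffCLM_apply] at this
  exact this

lemma bohrCoeff_smul {k : ℕ} {f : APB k} (hf : f ∈ APalg k) (c : ℂ)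
    (nu : Fin k → ℝ) : bohrCoeff k (c • f : APB k) nu = c * bohrCoeff k f nu := by
  have := (bohrCoeffCLM k nu).map_smul c ⟨f, hf⟩
  simp only [bohrCoeffCLM_apply] at this
  exact this

/-- A function in the Wiener algebra is the sum of its Bohr-Fourier series. -/
lemma APWmem.hasSum {k : ℕ} {Δ : Set (Fin k → ℝ)} {f : APB k} (hf : APWmem k Δ f) :
    HasSum (fun lam => bohrCoeff k f lam • apExp k lam) f := by
  have hs : Summable fun lam => bohrCoeff k f lam • apExp k lam :=
    Summable.of_norm_bounded hf.2 fun lam => norm_smul_apExp_le _ _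
  obtain ⟨g, hg⟩ := hs
  have hgm := mem_APalg_of_hasSum hg
  have : f - g = 0 := by
    refine eq_zero_of_bohrCoeff_eq_zero (sub_mem hf.1.1 hgm) fun nu => ?_
    rw [bohrCoeff_sub hf.1.1 hgm, sub_eq_zero]
    exact (hasSum_ite_eq nu (bohrCoeff k f nu)).unique
      ((hasSum_bohrCoeff hg nu).congr_fun fun i => by split_ifs with h <;> simp [h])
  convert hg using 1
  exact sub_eq_zero.1 this

lemma APWmem.mem_of_ne_zero {k : ℕ} {Δ : Set (Fin k → ℝ)} {f : APB k} (hf : APWmem k Δ f)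
    {lam : Fin k → ℝ} (h : bohrCoeff k f lam ≠ 0) : lam ∈ Δ :=
  hf.1.2 h

lemma APWmem_apExp {k : ℕ} {Δ : Set (Fin k → ℝ)} {lam : Fin k → ℝ} (h : lam ∈ Δ) :
    APWmem k Δ (apExp k lam) :=
  APWmem_of_hasSum (ι := Unit) (c := fun _ => 1) (l := fun _ => lam)
    (hasSum_fintype _).summable (fun _ _ => h) (by simp)

lemma wienerNorm_apExp_le {k : ℕ} (lam : Fin k → ℝ) : wienerNorm k (apExp k lam) ≤ 1 := by
  have := wienerNorm_le (ι := Unit) (c := fun _ => 1) (l := fun _ => lam) (f := apExp k lam)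
    (hasSum_fintype _).summable (by simp)
  simpa using this

lemma APWmem.add {k : ℕ} {Δ : Set (Fin k → ℝ)} {f g : APB k} (hf : APWmem k Δ f)
    (hg : APWmem k Δ g) : APWmem k Δ (f + g) := by
  have hc := bohrCoeff_add hf.1.1 hg.1.1
  refine ⟨⟨add_mem hf.1.1 hg.1.1, fun nu hnu => ?_⟩, ?_⟩
  · by_contra hmem
    refine hnu ?_
    rw [hc, not_not.1 (mt hf.mem_of_ne_zero hmem), not_not.1 (mt hg.mem_of_ne_zero hmem), add_zero]
  · simp_rw [hc]
    exact (hf.2.add hg.2).of_nonneg_of_le (fun _ => norm_nonneg _) fun _ => norm_add_le _ _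

lemma APWmem.smul {k : ℕ} {Δ : Set (Fin k → ℝ)} {f : APB k} (hf : APWmem k Δ f) (c : ℂ) :
    APWmem k Δ (c • f) := by
  have hc := bohrCoeff_smul hf.1.1 c
  refine ⟨⟨Subalgebra.smul_mem _ hf.1.1 _, fun nu hnu => hf.mem_of_ne_zero fun h => hnu ?_⟩, ?_⟩
  · rw [hc, h, mul_zero]
  · simp_rw [hc, norm_mul]
    exact hf.2.mul_left _

lemma summable_norm_mul_bohrCoeff {k : ℕ} {Δ : Set (Fin k → ℝ)} {f g : APB k}
    (hf : APWmem k Δ f) (hg : APWmem k Δ g) :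
    Summable fun p : (Fin k → ℝ) × (Fin k → ℝ) => ‖bohrCoeff k f p.1 * bohrCoeff k g p.2‖ :=
  summable_mul_of_summable_norm (f := bohrCoeff k f) (g := bohrCoeff k g) hf.2 hg.2 |>.norm

lemma APWmem.hasSum_mul {k : ℕ} {Δ : Set (Fin k → ℝ)} {f g : APB k} (hf : APWmem k Δ f)
    (hg : APWmem k Δ g) :
    HasSum (fun p : (Fin k → ℝ) × (Fin k → ℝ) =>
      (bohrCoeff k f p.1 * bohrCoeff k g p.2) • apExp k (p.1 + p.2)) (f * g) := by
  have hterm : ∀ p : (Fin k → ℝ) × (Fin k → ℝ),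
      (bohrCoeff k f p.1 • apExp k p.1) * (bohrCoeff k g p.2 • apExp k p.2) =
      (bohrCoeff k f p.1 * bohrCoeff k g p.2) • apExp k (p.1 + p.2) := fun p => by
    rw [apExp_add, smul_mul_smul_comm]
  have hs : Summable fun p : (Fin k → ℝ) × (Fin k → ℝ) =>
      (bohrCoeff k f p.1 • apExp k p.1) * (bohrCoeff k g p.2 • apExp k p.2) := by
    simp_rw [hterm]
    exact Summable.of_norm_bounded (summable_norm_mul_bohrCoeff hf hg) fun p =>
      norm_smul_apExp_le _ _
  simpa only [hterm] using hf.hasSum.mul hg.hasSum hs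

lemma APWmem.mul {k : ℕ} {Δ : Set (Fin k → ℝ)} (hΔ : ∀ x ∈ Δ, ∀ y ∈ Δ, x + y ∈ Δ) {f g : APB k}
    (hf : APWmem k Δ f) (hg : APWmem k Δ g) : APWmem k Δ (f * g) :=
  APWmem_of_hasSum (summable_norm_mul_bohrCoeff hf hg)
    (fun _ hp => hΔ _ (hf.mem_of_ne_zero (left_ne_zero_of_mul hp)) _
      (hg.mem_of_ne_zero (right_ne_zero_of_mul hp))) (hf.hasSum_mul hg)

lemma APWmem.wienerNorm_mul_le {k : ℕ} {Δ : Set (Fin k → ℝ)} {f g : APB k}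
    (hf : APWmem k Δ f) (hg : APWmem k Δ g) :
    wienerNorm k (f * g : APB k) ≤ wienerNorm k f * wienerNorm k g := by
  refine (wienerNorm_le (summable_norm_mul_bohrCoeff hf hg) (hf.hasSum_mul hg)).trans_eq ?_
  simp_rw [norm_mul]
  exact (hf.2.tsum_mul_tsum hg.2 (by simpa using summable_norm_mul_bohrCoeff hf hg)).symm

lemma APWmem.wienerNorm_smul {k : ℕ} {Δ : Set (Fin k → ℝ)} {f : APB k}
    (hf : APWmem k Δ f) (c : ℂ) : wienerNorm k (c • f : APB k) = ‖c‖ * wienerNorm k f := by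
  simp_rw [wienerNorm, bohrCoeff_smul hf.1.1, norm_mul, tsum_mul_left]

/-- The Wiener algebra `APW^k_Δ` of an additive semigroup `Δ ∋ 0`, as a subalgebra. -/
def wienerSubalgebra (k : ℕ) (Δ : Set (Fin k → ℝ)) (h0 : (0 : Fin k → ℝ) ∈ Δ)
    (hadd : ∀ x ∈ Δ, ∀ y ∈ Δ, x + y ∈ Δ) : Subalgebra ℂ (APB k) where
  carrier := {f | APWmem k Δ f}
  mul_mem' := fun hf hg => APWmem.mul hadd hf hg
  add_mem' := fun hf hg => APWmem.add hf hg
  algebraMap_mem' := fun r => by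
    rw [Algebra.algebraMap_eq_smul_one, ← apExp_zero]
    exact (APWmem_apExp h0).smul r

/-! ### Characters of the Wiener algebra -/

lemma AlgHom.ne_inv_smul_add_mul {A : Type*} [Ring A] [Algebra ℂ A] (ψ : A →ₐ[ℂ] ℂ) {f : A}
    (hf : ψ f ≠ 0) (g : A) : g ≠ (ψ f)⁻¹ • f + ((ψ f)⁻¹ • f) * g := by
  intro h
  have := congrArg ψ h
  rw [map_add, map_mul, map_smul, smul_eq_mul, inv_mul_cancel₀ hf, one_mul] at this
  simp at this

lemma AlgHom.map_sub_sum {A ι : Type*} [Ring A] [Algebra ℂ A] (ψ : A →ₐ[ℂ] ℂ) (f : A)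
    (s : Finset ι) (g : ι → A) : ψ (f - ∑ i ∈ s, g i) = ψ f - ∑ i ∈ s, ψ (g i) := by
  rw [map_sub, map_sum]

lemma hasSum_mul_of_summable_norm {ι : Type*} {a b : ι → ℂ} (ha : Summable fun i => ‖a i‖)
    (hb : Summable fun i => ‖b i‖) :
    HasSum (fun p : ι × ι => a p.1 * b p.2) ((∑' i, a i) * ∑' i, b i) :=
  ha.of_norm.hasSum.mul hb.of_norm.hasSum (summable_mul_of_summable_norm ha hb)

section Characters

variable {k : ℕ} {Δ : Set (Fin k → ℝ)}

lemma wienerNorm_nonneg (f : APB k) : 0 ≤ wienerNorm k f :=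
  tsum_nonneg fun _ => norm_nonneg _

lemma APWmem.pow_succ_mem (hadd : ∀ x ∈ Δ, ∀ y ∈ Δ, x + y ∈ Δ) {f : APB k} (hf : APWmem k Δ f)
    (n : ℕ) : APWmem k Δ (f ^ (n + 1)) ∧
      wienerNorm k (f ^ (n + 1) : APB k) ≤ wienerNorm k f ^ (n + 1) := by
  induction n with
  | zero => simpa using hf
  | succ n ih =>
    rw [pow_succ f, pow_succ (wienerNorm k f)]
    exact ⟨ih.1.mul hadd hf, (ih.1.wienerNorm_mul_le hf).trans
      (mul_le_mul_of_nonneg_right ih.2 (wienerNorm_nonneg f))⟩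

/-- Elements of Wiener norm less than one are quasi-invertible in the Wiener algebra. -/
lemma APWmem.exists_eq_add_mul (hadd : ∀ x ∈ Δ, ∀ y ∈ Δ, x + y ∈ Δ) {f : APB k}
    (hf : APWmem k Δ f) (h1 : wienerNorm k f < 1) : ∃ g, APWmem k Δ g ∧ g = f + f * g := by
  have hpow := hf.pow_succ_mem hadd
  have hgeom : Summable fun n : ℕ => wienerNorm k f ^ (n + 1) :=
    (summable_nat_add_iff 1).2 (summable_geometric_of_lt_one (wienerNorm_nonneg f) h1)
  have hc : Summable fun p : ℕ × (Fin k → ℝ) => ‖bohrCoeff k (f ^ (p.1 + 1) : APB k) p.2‖ := by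
    refine (summable_prod_of_nonneg fun _ => norm_nonneg _).2 ⟨fun n => (hpow n).1.2, ?_⟩
    exact hgeom.of_nonneg_of_le (fun n => wienerNorm_nonneg (f ^ (n + 1))) fun n => (hpow n).2
  obtain ⟨g, hg⟩ : Summable fun p : ℕ × (Fin k → ℝ) =>
      bohrCoeff k (f ^ (p.1 + 1) : APB k) p.2 • apExp k p.2 :=
    Summable.of_norm_bounded hc fun p => norm_smul_apExp_le _ _
  have hsum : HasSum (fun n => f ^ (n + 1)) g := hg.prod_fiberwise fun n => (hpow n).1.hasSum
  refine ⟨g, APWmem_of_hasSum hc (fun p hp => (hpow p.1).1.mem_of_ne_zero hp) hg, ?_⟩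
  have h2 : HasSum (fun n => f ^ (n + 1 + 1)) (f * g) := by
    simpa only [← pow_succ'] using hsum.mul_left f
  have h3 := (hasSum_nat_add_iff (f := fun n => f ^ (n + 1)) 1).1 h2
  exact (hsum.unique h3).trans (by simp [add_comm])

lemma APWmem.wienerNorm_sub_sum_le {f : APB k} (hf : APWmem k Δ f) (F : Finset (Fin k → ℝ)) :
    wienerNorm k (f - ∑ lam ∈ F, bohrCoeff k f lam • apExp k lam : APB k) ≤
      ∑' lam : {lam // lam ∉ F}, ‖bohrCoeff k f lam‖ := by
  have h : HasSum (fun lam : {lam // lam ∉ F} => bohrCoeff k f lam • apExp k (lam : Fin k → ℝ))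
      (f - ∑ lam ∈ F, bohrCoeff k f lam • apExp k lam) := by
    refine (Finset.hasSum_compl_iff (f := fun lam => bohrCoeff k f lam • apExp k lam) F).2 ?_
    rw [sub_add_cancel]
    exact hf.hasSum
  exact wienerNorm_le (hf.2.subtype _) h

/-- A multiplicative linear functional as an algebra homomorphism on the Wiener algebra. -/
def toWienerHom (h0 : (0 : Fin k → ℝ) ∈ Δ) (hadd : ∀ x ∈ Δ, ∀ y ∈ Δ, x + y ∈ Δ)
    (φ : apCharacters k {f | APWmem k Δ f}) : wienerSubalgebra k Δ h0 hadd →ₐ[ℂ] ℂ :=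
  AlgHom.ofLinearMap
    { toFun := fun f => φ.1 ⟨f.1, f.2⟩
      map_add' := fun f g => φ.2.2.1 ⟨f.1, f.2⟩ ⟨g.1, g.2⟩ (f + g).2
      map_smul' := fun c f => φ.2.2.2.1 c ⟨f.1, f.2⟩ (c • f).2 }
    (by
      obtain ⟨f, hf⟩ : ∃ f, φ.1 f ≠ 0 := Function.ne_iff.1 φ.2.1
      have h := φ.2.2.2.2 f ⟨1, (wienerSubalgebra k Δ h0 hadd).one_mem⟩
        ((wienerSubalgebra k Δ h0 hadd).mul_mem f.2 (wienerSubalgebra k Δ h0 hadd).one_mem)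
      simp only [mul_one] at h
      exact (mul_eq_left₀ hf).1 h.symm)
    (fun f g => φ.2.2.2.2 ⟨f.1, f.2⟩ ⟨g.1, g.2⟩ (f * g).2)

/-- Characters of the Wiener algebra are contractive for the Wiener norm. -/
lemma norm_wienerHom_le {h0 : (0 : Fin k → ℝ) ∈ Δ} {hadd : ∀ x ∈ Δ, ∀ y ∈ Δ, x + y ∈ Δ}
    (ψ : wienerSubalgebra k Δ h0 hadd →ₐ[ℂ] ℂ) (f : wienerSubalgebra k Δ h0 hadd) :
    ‖ψ f‖ ≤ wienerNorm k (f : APB k) := by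
  by_contra! hlt
  have hpos : 0 < ‖ψ f‖ := (wienerNorm_nonneg _).trans_lt hlt
  have hfm : APWmem k Δ (f : APB k) := f.2
  obtain ⟨g, hg, hgeq⟩ := (hfm.smul (ψ f)⁻¹).exists_eq_add_mul hadd (by
    rw [hfm.wienerNorm_smul, norm_inv, inv_mul_lt_iff₀ hpos, mul_one]
    exact hlt)
  have hgeq' : (⟨g, hg⟩ : wienerSubalgebra k Δ h0 hadd) =
      (ψ f)⁻¹ • f + ((ψ f)⁻¹ • f) * ⟨g, hg⟩ := Subtype.ext hgeq
  exact ψ.ne_inv_smul_add_mul (norm_pos_iff.1 hpos) _ hgeq'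

open Classical in
/-- The values of a functional on exponentials, extended by zero off `Δ`. -/
def expValue (φ : ↥{f : APB k | APWmem k Δ f} → ℂ) (lam : Fin k → ℝ) : ℂ :=
  if h : lam ∈ Δ then φ ⟨apExp k lam, APWmem_apExp h⟩ else 0

lemma expValue_of_mem (φ : ↥{f : APB k | APWmem k Δ f} → ℂ) {lam : Fin k → ℝ} (h : lam ∈ Δ) :
    expValue φ lam = φ ⟨apExp k lam, APWmem_apExp h⟩ := dif_pos h

lemma continuous_expValue (lam : Fin k → ℝ) :
    Continuous fun φ : ↥{f : APB k | APWmem k Δ f} → ℂ => expValue φ lam := by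
  by_cases h : lam ∈ Δ
  · simp_rw [expValue_of_mem _ h]
    exact continuous_apply _
  · simp only [expValue, dif_neg h]
    exact continuous_const

lemma norm_expValue_le (h0 : (0 : Fin k → ℝ) ∈ Δ) (hadd : ∀ x ∈ Δ, ∀ y ∈ Δ, x + y ∈ Δ)
    (φ : apCharacters k {f | APWmem k Δ f}) (lam : Fin k → ℝ) : ‖expValue φ.1 lam‖ ≤ 1 := by
  by_cases h : lam ∈ Δ
  · rw [expValue_of_mem _ h]
    exact (norm_wienerHom_le (toWienerHom h0 hadd φ) ⟨apExp k lam, APWmem_apExp h⟩).trans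
      (wienerNorm_apExp_le lam)
  · simp [expValue, h]

lemma expValue_zero (h0 : (0 : Fin k → ℝ) ∈ Δ) (hadd : ∀ x ∈ Δ, ∀ y ∈ Δ, x + y ∈ Δ)
    (φ : apCharacters k {f | APWmem k Δ f}) : expValue φ.1 0 = 1 := by
  rw [expValue_of_mem _ h0]
  exact (congrArg φ.1 (Subtype.ext (apExp_zero k))).trans (map_one (toWienerHom h0 hadd φ))

lemma expValue_add (hadd : ∀ x ∈ Δ, ∀ y ∈ Δ, x + y ∈ Δ)
    (φ : apCharacters k {f | APWmem k Δ f}) {lam mu : Fin k → ℝ} (hl : lam ∈ Δ) (hm : mu ∈ Δ) :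
    expValue φ.1 (lam + mu) = expValue φ.1 lam * expValue φ.1 mu := by
  rw [expValue_of_mem _ hl, expValue_of_mem _ hm, expValue_of_mem _ (hadd _ hl _ hm)]
  have hmem : apExp k lam * apExp k mu ∈ {f | APWmem k Δ f} :=
    (APWmem_apExp hl).mul hadd (APWmem_apExp hm)
  rw [← φ.2.2.2.2 ⟨_, APWmem_apExp hl⟩ ⟨_, APWmem_apExp hm⟩ hmem]
  exact congrArg φ.1 (Subtype.ext (apExp_add k lam mu))

/-- A character is determined by its values on exponentials. -/
lemma hasSum_expValue (h0 : (0 : Fin k → ℝ) ∈ Δ) (hadd : ∀ x ∈ Δ, ∀ y ∈ Δ, x + y ∈ Δ)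
    (φ : apCharacters k {f | APWmem k Δ f}) (f : ↥{f : APB k | APWmem k Δ f}) :
    HasSum (fun lam => bohrCoeff k (f : APB k) lam * expValue φ.1 lam) (φ.1 f) := by
  have hf : APWmem k Δ (f : APB k) := f.2
  set W := wienerSubalgebra k Δ h0 hadd
  set ψ := toWienerHom h0 hadd φ
  have hmem : ∀ lam, bohrCoeff k (f : APB k) lam • apExp k lam ∈ W := fun lam => by
    by_cases h : bohrCoeff k (f : APB k) lam = 0
    · rw [h, zero_smul]
      exact W.zero_mem
    · exact (APWmem_apExp (hf.mem_of_ne_zero h)).smul _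
  have hψ : ∀ lam, ψ ⟨_, hmem lam⟩ = bohrCoeff k (f : APB k) lam * expValue φ.1 lam := fun lam => by
    by_cases h : bohrCoeff k (f : APB k) lam = 0
    · have hz : (⟨_, hmem lam⟩ : W) = 0 := Subtype.ext (by simp [h])
      rw [hz, map_zero ψ, h, zero_mul]
    · rw [expValue_of_mem _ (hf.mem_of_ne_zero h)]
      exact φ.2.2.2.1 _ ⟨_, APWmem_apExp (hf.mem_of_ne_zero h)⟩ (hmem lam)
  refine tendsto_iff_norm_sub_tendsto_zero.2 ?_
  refine squeeze_zero (fun _ => norm_nonneg _) (fun F => ?_)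
    (tendsto_tsum_compl_atTop_zero fun lam => ‖bohrCoeff k (f : APB k) lam‖)
  have hF : (∑ lam ∈ F, bohrCoeff k (f : APB k) lam * expValue φ.1 lam) - φ.1 f =
      - ψ (⟨f.1, f.2⟩ - ∑ lam ∈ F, ⟨_, hmem lam⟩) := by
    rw [ψ.map_sub_sum, neg_sub]
    simp_rw [hψ]
    rfl
  rw [hF, norm_neg]
  refine (norm_wienerHom_le ψ _).trans ?_
  have hcoe : ((⟨f.1, f.2⟩ - ∑ lam ∈ F, ⟨_, hmem lam⟩ : W) : APB k) =
      (f : APB k) - ∑ lam ∈ F, bohrCoeff k (f : APB k) lam • apExp k lam := by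
    rw [Subalgebra.coe_sub]
    exact congrArg _ (map_sum W.val _ _)
  rw [hcoe]
  exact hf.wienerNorm_sub_sum_le F

/-- The functional with prescribed values on exponentials. -/
def ofExpValue (Δ : Set (Fin k → ℝ)) (χ : (Fin k → ℝ) → ℂ)
    (f : ↥{f : APB k | APWmem k Δ f}) : ℂ :=
  ∑' lam, bohrCoeff k (f : APB k) lam * χ lam

lemma summable_bohrCoeff_mul {χ : (Fin k → ℝ) → ℂ} (hχ : ∀ lam ∈ Δ, ‖χ lam‖ ≤ 1) {f : APB k}
    (hf : APWmem k Δ f) : Summable fun lam => ‖bohrCoeff k f lam * χ lam‖ := by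
  refine hf.2.of_nonneg_of_le (fun _ => norm_nonneg _) fun lam => ?_
  by_cases h : bohrCoeff k f lam = 0
  · simp [h]
  · rw [norm_mul]
    exact mul_le_of_le_one_right (norm_nonneg _) (hχ _ (hf.mem_of_ne_zero h))

lemma ofExpValue_mem (h0 : (0 : Fin k → ℝ) ∈ Δ) {χ : (Fin k → ℝ) → ℂ}
    (hχ : ∀ lam ∈ Δ, ‖χ lam‖ ≤ 1) (hχ0 : χ 0 = 1)
    (hχadd : ∀ lam ∈ Δ, ∀ mu ∈ Δ, χ (lam + mu) = χ lam * χ mu) :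
    ofExpValue Δ χ ∈ apCharacters k {f | APWmem k Δ f} := by
  refine ⟨fun h => ?_, fun f g h => ?_, fun c f h => ?_, fun f g h => ?_⟩
  · have := congrFun h ⟨apExp k 0, APWmem_apExp h0⟩
    simp [ofExpValue, bohrCoeff_apExp, hχ0] at this
  · simp only [ofExpValue]
    rw [← (summable_bohrCoeff_mul hχ f.2).of_norm.tsum_add (summable_bohrCoeff_mul hχ g.2).of_norm]
    simp_rw [bohrCoeff_add f.2.1.1 g.2.1.1, add_mul]
  · simp only [ofExpValue]
    simp_rw [bohrCoeff_smul f.2.1.1, mul_assoc, tsum_mul_left]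
  · have hf : APWmem k Δ (f : APB k) := f.2
    have hg : APWmem k Δ (g : APB k) := g.2
    have hsf := summable_bohrCoeff_mul hχ hf
    have hsg := summable_bohrCoeff_mul hχ hg
    refine (hasSum_bohrCoeff_mul (hf.hasSum_mul hg) χ ?_).tsum_eq
    refine (hasSum_mul_of_summable_norm hsf hsg).congr_fun fun p => ?_
    by_cases h1 : bohrCoeff k (f : APB k) p.1 = 0
    · simp [h1]
    by_cases h2 : bohrCoeff k (g : APB k) p.2 = 0
    · simp [h2]
    rw [hχadd _ (hf.mem_of_ne_zero h1) _ (hg.mem_of_ne_zero h2)]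
    ring

end Characters

/-! ### Halfspaces and paths of semicharacters -/

/-- A halfspace of a nontrivial finite-dimensional space is nonnegative for some nonzero
functional. -/
lemma exists_nonneg_functional {E : Type*} [NormedAddCommGroup E] [NormedSpace ℝ E]
    [FiniteDimensional ℝ E] [Nontrivial E] {C : Set E} (htotal : ∀ x, x ∈ C ∨ -x ∈ C)
    (hsalient : ∀ x ∈ C, -x ∈ C → x = 0) (hadd : ∀ x ∈ C, ∀ y ∈ C, x + y ∈ C)
    (hsmul : ∀ x ∈ C, ∀ a : ℝ, 0 ≤ a → a • x ∈ C) :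
    ∃ ℓ : E →L[ℝ] ℝ, ℓ ≠ 0 ∧ ∀ x ∈ C, 0 ≤ ℓ x := by
  have hconv : Convex ℝ C := fun x hx y hy a b ha hb _ =>
    hadd _ (hsmul x hx a ha) _ (hsmul y hy b hb)
  have h0C : (0 : E) ∈ C := by simpa using htotal 0
  have hne : (interior C).Nonempty := by
    rw [hconv.interior_nonempty_iff_affineSpan_eq_top, eq_top_iff]
    intro x _
    rcases htotal x with hx | hx
    · exact subset_affineSpan ℝ C hx
    · have := AffineMap.lineMap_mem (-1 : ℝ) (subset_affineSpan ℝ C h0C)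
        (subset_affineSpan ℝ C hx)
      simpa [AffineMap.lineMap_apply] using this
  have h0 : (0 : E) ∉ interior C := by
    intro h
    have hC : C ∈ nhds (0 : E) := mem_interior_iff_mem_nhds.1 h
    have hC' : (fun x : E => -x) ⁻¹' C ∈ nhds (0 : E) :=
      continuous_neg.continuousAt.preimage_mem_nhds (by simpa using hC)
    have hs : ({0} : Set E) ∈ nhds (0 : E) :=
      mem_of_superset (inter_mem hC hC') fun x hx => hsalient x hx.1 hx.2
    have := Module.punctured_nhds_neBot ℝ E 0
    have hi := mem_interior_iff_mem_nhds.2 hs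
    rw [interior_singleton] at hi
    exact hi
  obtain ⟨g, hg⟩ := geometric_hahn_banach_open_point hconv.interior isOpen_interior h0
  rw [map_zero] at hg
  obtain ⟨y, hy⟩ := hne
  refine ⟨-g, fun h => ?_, fun x hx => ?_⟩
  · have := hg y hy
    rw [neg_eq_zero.1 h] at this
    exact lt_irrefl _ this
  · have hcl : x ∈ closure (interior C) := by
      rw [hconv.closure_interior_eq_closure_of_nonempty_interior ⟨y, hy⟩]
      exact subset_closure hx
    have hclosed : IsClosed {z : E | 0 ≤ (-g) z} := isClosed_le continuous_const (-g).continuous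
    refine closure_minimal (fun z hz => ?_) hclosed hcl
    simpa using (hg z hz).le

open Classical in
/-- On a halfspace, the trivial semicharacter is joined to the indicator of the origin by a path
of semicharacters with values in `[0,1]`. -/
lemma exists_semicharacter_path (n : ℕ) :
    ∀ (E : Type) [NormedAddCommGroup E] [NormedSpace ℝ E] [FiniteDimensional ℝ E],
    Module.finrank ℝ E = n → ∀ C : Set E, (∀ x, x ∈ C ∨ -x ∈ C) →
    (∀ x ∈ C, -x ∈ C → x = 0) → (∀ x ∈ C, ∀ y ∈ C, x + y ∈ C) →
    (∀ x ∈ C, ∀ a : ℝ, 0 ≤ a → a • x ∈ C) →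
    ∃ ρ : ℝ → E → ℝ, (∀ x ∈ C, Continuous fun t => ρ t x) ∧
      (∀ t, ∀ x ∈ C, 0 ≤ ρ t x ∧ ρ t x ≤ 1) ∧
      (∀ t, ∀ x ∈ C, ∀ y ∈ C, ρ t (x + y) = ρ t x * ρ t y) ∧
      (∀ t ≤ 0, ∀ x ∈ C, ρ t x = 1) ∧
      (∀ t, (n : ℝ) ≤ t → ∀ x ∈ C, ρ t x = if x = 0 then 1 else 0) ∧
      ∀ t, ρ t 0 = 1 := by
  induction n with
  | zero =>
    intro E _ _ _ hE C _ _ _ _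
    have : Subsingleton E := Module.finrank_zero_iff.1 hE
    exact ⟨fun _ _ => 1, by simp [Subsingleton.elim _ (0 : E), continuous_const]⟩
  | succ n ih =>
    intro E _ _ _ hE C htotal hsalient hadd hsmul
    have : Nontrivial E := Module.nontrivial_of_finrank_pos (R := ℝ) (by omega)
    obtain ⟨ℓ, hℓ, hpos⟩ := exists_nonneg_functional htotal hsalient hadd hsmul
    set K : Submodule ℝ E := LinearMap.ker (ℓ : E →ₗ[ℝ] ℝ)
    have hmemK : ∀ x, x ∈ K ↔ ℓ x = 0 := fun x => LinearMap.mem_ker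
    have hrank : Module.finrank ℝ K = n := by
      have hne : (ℓ : E →ₗ[ℝ] ℝ) ≠ 0 := fun h => hℓ (ContinuousLinearMap.coe_injective h)
      have := Module.Dual.finrank_ker_add_one_of_ne_zero (f := (ℓ : E →ₗ[ℝ] ℝ)) hne
      change Module.finrank ℝ K + 1 = _ at this
      omega
    obtain ⟨ρ, hcont, hbd, hmul, hzero, hone, horigin⟩ := ih K hrank (K.subtype ⁻¹' C)
      (fun x => htotal x) (fun x hx hx' => Subtype.ext (hsalient x hx hx'))
      (fun x hx y hy => hadd x hx y hy) (fun x hx a ha => hsmul x hx a ha)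
    set b : ℝ → ℝ := fun t => max 0 (min 1 (1 - t)) with hb
    have hb0 : ∀ t, 0 ≤ b t := fun t => le_max_left _ _
    have hb1 : ∀ t, b t ≤ 1 := fun t => max_le zero_le_one (min_le_left _ _)
    have hbs : ∀ t ≤ 0, b t = 1 := fun t ht => by
      rw [hb]
      simp only
      rw [min_eq_left (by linarith), max_eq_right zero_le_one]
    have hbe : ∀ t, 1 ≤ t → b t = 0 := fun t ht =>
      max_eq_left ((min_le_right _ _).trans (by linarith))
    have hbc : Continuous b := by fun_prop
    set τ : ℝ → E → ℝ := fun t x => if h : x ∈ K then ρ (t - 1) ⟨x, h⟩ else b t ^ ℓ x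
    have hτpos : ∀ t x (h : x ∈ K), τ t x = ρ (t - 1) ⟨x, h⟩ := fun t x h => dif_pos h
    have hτneg : ∀ t x, x ∉ K → τ t x = b t ^ ℓ x := fun t x h => dif_neg h
    have hmixed : ∀ t, ∀ x ∈ C, ∀ y ∈ C, x ∈ K → y ∉ K → τ t (x + y) = τ t x * τ t y := by
      intro t x hx y hy h1 h2
      have h3 : x + y ∉ K := fun h => h2 ((K.add_mem_iff_right h1).1 h)
      rw [hτneg t _ h3, hτneg t _ h2, hτpos t _ h1, map_add, (hmemK x).1 h1, zero_add]
      rcases le_total t 1 with ht | ht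
      · rw [hzero (t - 1) (by linarith) _ hx, one_mul]
      · rw [hbe t ht, Real.zero_rpow (mt (hmemK y).2 h2), mul_zero]
    refine ⟨τ, fun x hx => ?_, fun t x hx => ?_, fun t x hx y hy => ?_, fun t ht x hx => ?_,
      fun t ht x hx => ?_, fun t => ?_⟩
    · by_cases h : x ∈ K
      · simp_rw [hτpos _ x h]
        exact (hcont ⟨x, h⟩ hx).comp (continuous_id.sub continuous_const)
      · simp_rw [hτneg _ x h]
        exact hbc.rpow_const fun t => Or.inr (hpos x hx)
    · by_cases h : x ∈ K
      · rw [hτpos _ x h]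
        exact hbd _ _ hx
      · rw [hτneg _ x h]
        exact ⟨Real.rpow_nonneg (hb0 t) _, Real.rpow_le_one (hb0 t) (hb1 t) (hpos x hx)⟩
    · by_cases h1 : x ∈ K <;> by_cases h2 : y ∈ K
      · rw [hτpos t _ h1, hτpos t _ h2, hτpos t _ (K.add_mem h1 h2)]
        exact hmul (t - 1) ⟨x, h1⟩ hx ⟨y, h2⟩ hy
      · exact hmixed t x hx y hy h1 h2
      · rw [add_comm, mul_comm]
        exact hmixed t y hy x hx h2 h1
      · have hx0 := (hpos x hx).lt_of_ne' (mt (hmemK x).2 h1)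
        have h3 : x + y ∉ K := fun h => by
          have := (hmemK _).1 h
          rw [map_add] at this
          linarith [hpos y hy]
        rw [hτneg t _ h1, hτneg t _ h2, hτneg t _ h3, map_add,
          Real.rpow_add_of_nonneg (hb0 t) (hpos x hx) (hpos y hy)]
    · by_cases h : x ∈ K
      · rw [hτpos _ x h]
        exact hzero _ (by linarith) _ hx
      · rw [hτneg _ x h, hbs t ht, Real.one_rpow]
    · push_cast at ht
      by_cases h : x ∈ K
      · rw [hτpos _ x h, hone _ (by linarith) _ hx]
        simp
      · have hx0 : x ≠ 0 := fun h' => h (h' ▸ K.zero_mem)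
        have : (0 : ℝ) ≤ n := n.cast_nonneg
        rw [hτneg _ x h, hbe t (by linarith), Real.zero_rpow (mt (hmemK x).2 h), if_neg hx0]
    · rw [hτpos t 0 K.zero_mem]
      exact horigin _

/-- **Contractibility of `M(APW^k_Σ)`** (Theorem 3.1 for `APW`).  Let `S ⊂ ℝ^k`
be a halfspace and `Σ ⊆ S` an additive semigroup containing `0`.  Then the
maximal ideal space of the Wiener algebra `APW^k_Σ` is contractible. -/
theorem apw_characterSpace_contractible (k : ℕ) (S Sg : Set (Fin k → ℝ))
    (hS : IsHalfspace k S) (hSgS : Sg ⊆ S) (h0 : (0 : Fin k → ℝ) ∈ Sg)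
    (hadd : ∀ x ∈ Sg, ∀ y ∈ Sg, x + y ∈ Sg) :
    ContractibleSpace ↥(apCharacters k {f | APWmem k Sg f}) := by
  classical
  obtain ⟨ρ, hcont, hbd, hmul, hstart, hend, horigin⟩ := exists_semicharacter_path _
    (Fin k → ℝ) rfl S (fun x => (hS.union.ge (Set.mem_univ x)).imp_right id)
    (fun x hx hx' => hS.inter.le ⟨hx, hx'⟩) hS.add_mem hS.smul_mem
  set N : ℝ := (Module.finrank ℝ (Fin k → ℝ) : ℝ)
  have hmem : ∀ (t : unitInterval) (φ : apCharacters k {f | APWmem k Sg f}),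
      ofExpValue Sg (fun lam => (ρ (N * t) lam : ℂ) * expValue φ.1 lam) ∈
        apCharacters k {f | APWmem k Sg f} := by
    intro t φ
    refine ofExpValue_mem h0 (fun lam hlam => ?_) ?_ fun lam hl mu hm => ?_
    · rw [norm_mul, Complex.norm_real, Real.norm_of_nonneg (hbd _ _ (hSgS hlam)).1]
      exact mul_le_one₀ (hbd _ _ (hSgS hlam)).2 (norm_nonneg _) (norm_expValue_le h0 hadd φ lam)
    · rw [horigin, expValue_zero h0 hadd]
      simp
    · rw [hmul _ _ (hSgS hl) _ (hSgS hm), expValue_add hadd φ hl hm]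
      push_cast
      ring
  have hbase : ofExpValue Sg (fun lam => if lam = 0 then 1 else 0) ∈
      apCharacters k {f | APWmem k Sg f} := by
    refine ofExpValue_mem h0 (fun lam _ => by split_ifs <;> simp) (by simp) fun lam hl mu hm => ?_
    have h := hmul N lam (hSgS hl) mu (hSgS hm)
    rw [hend N le_rfl _ (hSgS hl), hend N le_rfl _ (hSgS hm),
      hend N le_rfl _ (hSgS (hadd _ hl _ hm))] at h
    exact_mod_cast congrArg (fun r : ℝ => (r : ℂ)) h
  refine (contractible_iff_id_nullhomotopic _).2 ⟨⟨_, hbase⟩, ⟨?_⟩⟩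
  refine
    { toFun := fun p => ⟨_, hmem p.1 p.2⟩
      continuous_toFun := ?_
      map_zero_left := fun φ => ?_
      map_one_left := fun φ => ?_ }
  · refine Continuous.subtype_mk (continuous_pi fun f => ?_) _
    have hf : APWmem k Sg (f : APB k) := f.2
    refine continuous_tsum (fun lam => ?_) hf.2 fun lam p => ?_
    · by_cases h : bohrCoeff k (f : APB k) lam = 0
      · simp_rw [h, zero_mul]
        exact continuous_const
      · have hlam := hSgS (hf.mem_of_ne_zero h)
        have hρ : Continuous fun p : unitInterval × apCharacters k {f | APWmem k Sg f} =>
            ρ (N * p.1) lam :=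
          (hcont lam hlam).comp (continuous_const.mul (continuous_subtype_val.comp continuous_fst))
        exact continuous_const.mul ((Complex.continuous_ofReal.comp hρ).mul
          ((continuous_expValue lam).comp (continuous_subtype_val.comp continuous_snd)))
    · by_cases h : bohrCoeff k (f : APB k) lam = 0
      · simp [h]
      · have hb := hbd (N * p.1) lam (hSgS (hf.mem_of_ne_zero h))
        rw [norm_mul, norm_mul, Complex.norm_real, Real.norm_of_nonneg hb.1]
        exact mul_le_of_le_one_right (norm_nonneg _)
          (mul_le_one₀ hb.2 (norm_nonneg _) (norm_expValue_le h0 hadd p.2 lam))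
  · refine Subtype.ext (funext fun f => ?_)
    have hf : APWmem k Sg (f : APB k) := f.2
    refine ((hasSum_expValue h0 hadd φ f).congr_fun fun lam => ?_).tsum_eq
    by_cases h : bohrCoeff k (f : APB k) lam = 0
    · simp [h]
    · simp [hstart 0 le_rfl lam (hSgS (hf.mem_of_ne_zero h))]
  · refine Subtype.ext (funext fun f => tsum_congr fun lam => ?_)
    have hf : APWmem k Sg (f : APB k) := f.2
    by_cases h : bohrCoeff k (f : APB k) lam = 0
    · simp [h]
    · have hlam := hend N le_rfl lam (hSgS (hf.mem_of_ne_zero h))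
      by_cases hz : lam = 0
      · subst hz
        simp [hlam, expValue_zero h0 hadd]
      · simp [hlam, hz]
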